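/- Let ℬ := {B ∈ F : E_μ̄[1_B] > 0 and E_{λQ_α^c}[1_B] = 0} and let β := sup_{B ∈ ℬ} E_μ̄[1_B], with β := 0 if ℬ is empty. Then there exists X_α^0 ∈ 𝒳 with 0 ≤ X_α^0 ≤ 1, E_μ[X_α^0] < α and E_{λQ_α^c}[X_α^0] = γ_α^c if and only if β > 1 − α. -/

import Mathlib

open MeasureTheory Filter Topology
open scoped ENNReal

/-- `X` belongs to the space `𝒳` of bounded measurable real-valued functions on `Ω`. -/
def MemX {Ω : Type*} [MeasurableSpace Ω] (X : Ω → ℝ) : Prop :=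
  Measurable X ∧ ∃ M : ℝ, ∀ ω, |X ω| ≤ M

/-- A sublinear operator on `𝒳`: monotone, constant preserving, subadditive and
positively homogeneous. -/
def IsSublinearOp {Ω : Type*} [MeasurableSpace Ω] (ρ : (Ω → ℝ) → ℝ) : Prop :=
  (∀ X Y : Ω → ℝ, MemX X → MemX Y → (∀ ω, Y ω ≤ X ω) → ρ Y ≤ ρ X) ∧
  (∀ c : ℝ, ρ (fun _ => c) = c) ∧
  (∀ X Y : Ω → ℝ, MemX X → MemX Y → ρ (X + Y) ≤ ρ X + ρ Y) ∧
  (∀ c : ℝ, 0 ≤ c → ∀ X : Ω → ℝ, MemX X → ρ (c • X) = c * ρ X)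

/-- A linear functional on `𝒳`. -/
def IsLinearOp {Ω : Type*} [MeasurableSpace Ω] (L : (Ω → ℝ) → ℝ) : Prop :=
  (∀ X Y : Ω → ℝ, MemX X → MemX Y → L (X + Y) = L X + L Y) ∧
  (∀ (c : ℝ) (X : Ω → ℝ), MemX X → L (c • X) = c * L X)

/-- `L` is dominated by `ρ` on `𝒳`. -/
def Dominated {Ω : Type*} [MeasurableSpace Ω] (L ρ : (Ω → ℝ) → ℝ) : Prop :=
  ∀ X : Ω → ℝ, MemX X → L X ≤ ρ X

/-- The conjugate operator `E_ῡ[X] := -E_υ[-X]`. -/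
def conjOp {Ω : Type*} (ρ : (Ω → ℝ) → ℝ) : (Ω → ℝ) → ℝ := fun X => -ρ (-X)

/-- The set `𝒳_α` of test functions at significance level `α`. -/
def testSet {Ω : Type*} [MeasurableSpace Ω] (Emu : (Ω → ℝ) → ℝ) (α : ℝ) : Set (Ω → ℝ) :=
  {X | MemX X ∧ (∀ ω, 0 ≤ X ω ∧ X ω ≤ 1) ∧ Emu X ≤ α}

/-- A positive normalized linear functional `Qp` is *pure additive* if there is a
sequence of measurable sets `A n ↓ ∅` with `Qp(1_{A n}) → 1`. -/
def PureAdditive {Ω : Type*} [MeasurableSpace Ω] (Qp : (Ω → ℝ) → ℝ) : Prop :=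
  ∃ A : ℕ → Set Ω, (∀ n, MeasurableSet (A n)) ∧ Antitone A ∧ (⋂ n, A n) = ∅ ∧
    Tendsto (fun n => Qp ((A n).indicator fun _ => (1 : ℝ))) atTop (𝓝 1)

/-- Hypothesis (H1): for every sequence of measurable sets `A n ↓ ∅` such that
`lim E_υ[1_{A n}]` exists and is nonzero, one has `lim E_μ[1_{A n}] = 0`. -/
def HypH1 {Ω : Type*} [MeasurableSpace Ω] (Emu Eups : (Ω → ℝ) → ℝ) : Prop :=
  ∀ A : ℕ → Set Ω, (∀ n, MeasurableSet (A n)) → Antitone A → (⋂ n, A n) = ∅ →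
    ∀ l : ℝ, Tendsto (fun n => Eups ((A n).indicator fun _ => (1 : ℝ))) atTop (𝓝 l) →
      l ≠ 0 →
      Tendsto (fun n => Emu ((A n).indicator fun _ => (1 : ℝ))) atTop (𝓝 0)

/-- Hypothesis (H2): for every `X ∈ 𝒳_α` with `E_μ[X] > 0` and every positive
integer `K`, `E_μ[X] > E_μ[(X - 1/K)⁺]`. -/
def HypH2 {Ω : Type*} [MeasurableSpace Ω] (Emu : (Ω → ℝ) → ℝ) (α : ℝ) : Prop :=
  ∀ X ∈ testSet Emu α, 0 < Emu X → ∀ K : ℕ, 0 < K →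
    Emu (fun ω => max (X ω - 1 / (K : ℝ)) 0) < Emu X

/-- Hypothesis (H3): for every sequence of measurable sets `A n ↓ ∅`,
`lim E_μ[1_{A n}] < 1` and `lim E_υ[1_{A n}] < 1`. -/
def HypH3 {Ω : Type*} [MeasurableSpace Ω] (Emu Eups : (Ω → ℝ) → ℝ) : Prop :=
  ∀ A : ℕ → Set Ω, (∀ n, MeasurableSet (A n)) → Antitone A → (⋂ n, A n) = ∅ →
    (∀ l : ℝ, Tendsto (fun n => Emu ((A n).indicator fun _ => (1 : ℝ))) atTop (𝓝 l) →
      l < 1) ∧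
    (∀ l : ℝ, Tendsto (fun n => Eups ((A n).indicator fun _ => (1 : ℝ))) atTop (𝓝 l) →
      l < 1)

/-!
If a test `X` has slack, `E[X] < α`, then moving it a little towards the constant `1` keeps it
admissible, so it can maximize a positive linear functional `L` over all tests only if
`L[X] = L[1]`. By Markov's inequality such an `X` is close to `1` off an `L`-null set `B`, and the
indicator of `Bᶜ` is then again a test with slack. For the conjugate `Ē` of `E` one has
`Ē[1_B] = 1 - E[1_{Bᶜ}]`, so this slack says exactly that `Ē[1_B] > 1 - α`.
-/

section BoundedMeasurable

variable {Ω : Type*} [MeasurableSpace Ω] {X Y : Ω → ℝ}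

theorem memX_const (c : ℝ) : MemX (fun _ : Ω => c) :=
  ⟨measurable_const, |c|, fun _ => le_rfl⟩

theorem memX_indicator_one {B : Set Ω} (hB : MeasurableSet B) :
    MemX (B.indicator fun _ => (1 : ℝ)) := by
  refine ⟨measurable_const.indicator hB, 1, fun ω => ?_⟩
  by_cases h : ω ∈ B <;> simp [h]

theorem MemX.add (hX : MemX X) (hY : MemX Y) : MemX (X + Y) := by
  obtain ⟨hXm, M, hM⟩ := hX
  obtain ⟨hYm, N, hN⟩ := hY
  exact ⟨hXm.add hYm, M + N, fun ω => (abs_add_le _ _).trans (add_le_add (hM ω) (hN ω))⟩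

theorem MemX.const_smul (c : ℝ) (hX : MemX X) : MemX (c • X) := by
  obtain ⟨hXm, M, hM⟩ := hX
  refine ⟨hXm.const_smul c, |c| * M, fun ω => ?_⟩
  simpa only [Pi.smul_apply, smul_eq_mul, abs_mul] using
    mul_le_mul_of_nonneg_left (hM ω) (abs_nonneg c)

theorem MemX.neg (hX : MemX X) : MemX (-X) := by
  simpa only [neg_one_smul] using hX.const_smul (-1)

theorem MemX.sub (hX : MemX X) (hY : MemX Y) : MemX (X - Y) := by
  simpa only [sub_eq_add_neg] using hX.add hY.neg

theorem MemX.integrable (hX : MemX X) (ν : Measure Ω) [IsFiniteMeasure ν] : Integrable X ν := by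
  obtain ⟨hXm, M, hM⟩ := hX
  exact Integrable.of_bound hXm.aestronglyMeasurable M (Eventually.of_forall hM)

end BoundedMeasurable

/-- A monotone, normalized and translation-equivariant operator on `𝒳`: a normalized monetary
risk measure, up to the usual sign convention. -/
structure IsMonetaryOp {Ω : Type*} [MeasurableSpace Ω] (E : (Ω → ℝ) → ℝ) : Prop where
  mono : ∀ {X Y : Ω → ℝ}, MemX X → MemX Y → X ≤ Y → E X ≤ E Y
  map_zero : E 0 = 0
  map_add_const : ∀ {X : Ω → ℝ} (c : ℝ), MemX X → E (X + fun _ => c) = E X + c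

theorem IsSublinearOp.isMonetaryOp {Ω : Type*} [MeasurableSpace Ω] {ρ : (Ω → ℝ) → ℝ}
    (hρ : IsSublinearOp ρ) : IsMonetaryOp ρ := by
  obtain ⟨hmono, hconst, hadd, -⟩ := hρ
  have add_const_le {X : Ω → ℝ} (c : ℝ) (hX : MemX X) : ρ (X + fun _ => c) ≤ ρ X + c := by
    simpa only [hconst] using hadd X _ hX (memX_const c)
  refine ⟨fun hX hY h => hmono _ _ hY hX h, hconst 0, fun {X} c hX => ?_⟩
  have hcancel : (X + fun _ => c) + (fun _ => -c) = X := by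
    funext ω
    simp
  have hle := add_const_le (-c) (hX.add (memX_const c))
  rw [hcancel] at hle
  exact (add_const_le c hX).antisymm (by linarith)

namespace IsMonetaryOp

variable {Ω : Type*} [MeasurableSpace Ω] {E : (Ω → ℝ) → ℝ} {X : Ω → ℝ}

theorem map_const (hE : IsMonetaryOp E) (c : ℝ) : E (fun _ => c) = c := by
  calc E (fun _ => c) = E (0 + fun _ => c) := by rw [zero_add]
    _ = E 0 + c := hE.map_add_const c (memX_const 0)
    _ = c := by rw [hE.map_zero, zero_add]

theorem nonneg (hE : IsMonetaryOp E) (hX : MemX X) (hX0 : 0 ≤ X) : 0 ≤ E X :=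
  hE.map_zero ▸ hE.mono (memX_const 0) hX hX0

theorem conjOp_indicator_one (hE : IsMonetaryOp E) {B : Set Ω} (hB : MeasurableSet B) :
    conjOp E (B.indicator fun _ => (1 : ℝ)) = 1 - E (Bᶜ.indicator fun _ => (1 : ℝ)) := by
  rw [conjOp, Set.indicator_compl, sub_eq_neg_add (fun _ => (1 : ℝ)),
    hE.map_add_const 1 (memX_indicator_one hB).neg]
  ring

theorem conjOp_indicator_one_le_one (hE : IsMonetaryOp E) {B : Set Ω} (hB : MeasurableSet B) :
    conjOp E (B.indicator fun _ => (1 : ℝ)) ≤ 1 := by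
  rw [hE.conjOp_indicator_one hB, sub_le_self_iff]
  exact hE.nonneg (memX_indicator_one hB.compl) (Set.indicator_nonneg fun _ _ => zero_le_one)

end IsMonetaryOp

/-- A positive linear functional on `𝒳`, that is, integration against a finite, finitely additive
measure. -/
structure IsPositiveLinearOp {Ω : Type*} [MeasurableSpace Ω] (L : (Ω → ℝ) → ℝ) : Prop where
  isLinearOp : IsLinearOp L
  nonneg : ∀ {X : Ω → ℝ}, MemX X → 0 ≤ X → 0 ≤ L X

theorem isPositiveLinearOp_const_mul_integral {Ω : Type*} [MeasurableSpace Ω] {c : ℝ}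
    (hc : 0 ≤ c) (ν : Measure Ω) [IsFiniteMeasure ν] :
    IsPositiveLinearOp fun X : Ω → ℝ => c * ∫ ω, X ω ∂ν where
  isLinearOp := by
    refine ⟨fun X Y hX hY => ?_, fun a X _ => ?_⟩
    · simp only [Pi.add_apply]
      rw [integral_add (hX.integrable ν) (hY.integrable ν), mul_add]
    · simp only [Pi.smul_apply, smul_eq_mul]
      rw [integral_const_mul, mul_left_comm]
  nonneg _ hX0 := mul_nonneg hc (integral_nonneg hX0)

namespace IsPositiveLinearOp

variable {Ω : Type*} [MeasurableSpace Ω] {L : (Ω → ℝ) → ℝ} {X Y : Ω → ℝ}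

theorem map_add (hL : IsPositiveLinearOp L) (hX : MemX X) (hY : MemX Y) :
    L (X + Y) = L X + L Y :=
  hL.isLinearOp.1 X Y hX hY

theorem map_smul (hL : IsPositiveLinearOp L) (c : ℝ) (hX : MemX X) : L (c • X) = c * L X :=
  hL.isLinearOp.2 c X hX

theorem map_zero (hL : IsPositiveLinearOp L) : L 0 = 0 := by
  simpa using hL.map_smul 0 (memX_const 0)

theorem map_sub (hL : IsPositiveLinearOp L) (hX : MemX X) (hY : MemX Y) :
    L (X - Y) = L X - L Y := by
  have h := hL.map_add (hX.sub hY) hY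
  rw [sub_add_cancel] at h
  linarith

theorem mono (hL : IsPositiveLinearOp L) (hX : MemX X) (hY : MemX Y) (hXY : X ≤ Y) :
    L X ≤ L Y := by
  rw [← sub_nonneg, ← hL.map_sub hY hX]
  exact hL.nonneg (hY.sub hX) (sub_nonneg.2 hXY)

theorem mul_map_indicator_le (hL : IsPositiveLinearOp L) (hX : MemX X) (hX0 : 0 ≤ X) (δ : ℝ) :
    δ * L ({ω | δ ≤ X ω}.indicator fun _ => (1 : ℝ)) ≤ L X := by
  have hB : MemX ({ω | δ ≤ X ω}.indicator fun _ => (1 : ℝ)) :=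
    memX_indicator_one (measurableSet_le measurable_const hX.1)
  rw [← hL.map_smul δ hB]
  refine hL.mono (hB.const_smul δ) hX fun ω => ?_
  by_cases h : δ ≤ X ω
  · simp [h]
  · simpa [h] using hX0 ω

theorem map_indicator_eq_zero (hL : IsPositiveLinearOp L) (hX : MemX X) (hX0 : 0 ≤ X)
    (hLX : L X = 0) {δ : ℝ} (hδ : 0 < δ) :
    L ({ω | δ ≤ X ω}.indicator fun _ => (1 : ℝ)) = 0 := by
  have hB : MeasurableSet {ω | δ ≤ X ω} := measurableSet_le measurable_const hX.1
  have hmarkov : δ * L ({ω | δ ≤ X ω}.indicator fun _ => (1 : ℝ)) ≤ 0 :=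
    hLX ▸ hL.mul_map_indicator_le hX hX0 δ
  exact (nonpos_of_mul_nonpos_right hmarkov hδ).antisymm
    (hL.nonneg (memX_indicator_one hB) (Set.indicator_nonneg fun _ _ => zero_le_one))

end IsPositiveLinearOp

/-- The paper's `β`, with `E` for `E_μ` and a general functional `L` in place of `E_{λQ_α^c}`: the
supremum of `Ē[1_B]` over the `L`-null sets `B` with `Ē[1_B] > 0`. The convention `sSup ∅ = 0` is
the paper's `β := 0` for empty `ℬ`. -/
noncomputable def nullConjSup {Ω : Type*} [MeasurableSpace Ω] (E L : (Ω → ℝ) → ℝ) : ℝ :=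
  sSup {r : ℝ | ∃ B : Set Ω, MeasurableSet B ∧
    0 < conjOp E (B.indicator fun _ => (1 : ℝ)) ∧
    L (B.indicator fun _ => (1 : ℝ)) = 0 ∧
    r = conjOp E (B.indicator fun _ => (1 : ℝ))}

section Slack

variable {Ω : Type*} [MeasurableSpace Ω] {E L : (Ω → ℝ) → ℝ} {X : Ω → ℝ} {α : ℝ}

theorem lt_nullConjSup_iff (hE : IsMonetaryOp E) (hL0 : L 0 = 0) {c : ℝ} :
    c < nullConjSup E L ↔ ∃ B : Set Ω, MeasurableSet B ∧
      L (B.indicator fun _ => (1 : ℝ)) = 0 ∧ c < conjOp E (B.indicator fun _ => (1 : ℝ)) := by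
  constructor
  · intro hc
    rcases lt_or_ge c 0 with hneg | hnonneg
    · refine ⟨∅, MeasurableSet.empty, by rwa [Set.indicator_empty'], ?_⟩
      rwa [hE.conjOp_indicator_one MeasurableSet.empty, Set.compl_empty, Set.indicator_univ,
        hE.map_const, sub_self]
    · by_contra! hle
      refine hc.not_ge (Real.sSup_le ?_ hnonneg)
      rintro _ ⟨B, hB, -, hnull, rfl⟩
      exact hle B hB hnull
  · rintro ⟨B, hB, hnull, hc⟩
    rcases le_or_gt (conjOp E (B.indicator fun _ => (1 : ℝ))) 0 with hneg | hpos
    · exact (hc.trans_le hneg).trans_le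
        (Real.sSup_nonneg (by rintro _ ⟨B', -, hpos', -, rfl⟩; exact hpos'.le))
    · refine hc.trans_le (le_csSup ⟨1, ?_⟩ ⟨B, hB, hpos, hnull, rfl⟩)
      rintro _ ⟨B', hB', -, -, rfl⟩
      exact hE.conjOp_indicator_one_le_one hB'

theorem exists_mixture_mem_testSet (hE : IsMonetaryOp E) (hX : MemX X)
    (hX01 : ∀ ω, 0 ≤ X ω ∧ X ω ≤ 1) (hlt : E X < α) :
    ∃ ε : ℝ, 0 < ε ∧ ((1 - ε) • X + ε • fun _ => 1) ∈ testSet E α := by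
  obtain ⟨ε, hε0, hε⟩ := exists_between (lt_min one_pos (sub_pos.2 hlt))
  obtain ⟨hε1, hεα⟩ := lt_min_iff.1 hε
  have hY : MemX ((1 - ε) • X + ε • fun _ => 1) :=
    (hX.const_smul _).add ((memX_const 1).const_smul ε)
  refine ⟨ε, hε0, hY, fun ω => ?_, ?_⟩
  · obtain ⟨h0, h1⟩ := hX01 ω
    simp only [Pi.add_apply, Pi.smul_apply, smul_eq_mul]
    constructor <;> nlinarith
  · have hle : ((1 - ε) • X + ε • fun _ => 1) ≤ X + fun _ => ε := fun ω => by
      simp only [Pi.add_apply, Pi.smul_apply, smul_eq_mul]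
      nlinarith [(hX01 ω).1]
    calc E ((1 - ε) • X + ε • fun _ => 1)
        ≤ E (X + fun _ => ε) := hE.mono hY (hX.add (memX_const ε)) hle
      _ = E X + ε := hE.map_add_const ε hX
      _ ≤ α := by linarith

theorem map_eq_sSup_testSet_iff (hE : IsMonetaryOp E) (hL : IsPositiveLinearOp L)
    (hX : MemX X) (hX01 : ∀ ω, 0 ≤ X ω ∧ X ω ≤ 1) (hlt : E X < α) :
    L X = sSup (L '' testSet E α) ↔ L X = L fun _ => 1 := by
  have hXmem : X ∈ testSet E α := ⟨hX, hX01, hlt.le⟩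
  have hub : (L fun _ => 1) ∈ upperBounds (L '' testSet E α) := by
    rintro _ ⟨Y, hY, rfl⟩
    exact hL.mono hY.1 (memX_const 1) fun ω => (hY.2.1 ω).2
  constructor
  · intro hmax
    obtain ⟨ε, hε, hY⟩ := exists_mixture_mem_testSet hE hX hX01 hlt
    have hle : L ((1 - ε) • X + ε • fun _ => 1) ≤ L X :=
      hmax ▸ le_csSup ⟨_, hub⟩ ⟨_, hY, rfl⟩
    rw [hL.map_add (hX.const_smul _) ((memX_const 1).const_smul ε), hL.map_smul _ hX,
      hL.map_smul _ (memX_const 1)] at hle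
    refine (hub ⟨X, hXmem, rfl⟩).antisymm (le_of_mul_le_mul_left ?_ hε)
    linarith
  · intro hone
    have hgreatest : IsGreatest (L '' testSet E α) (L X) := ⟨⟨X, hXmem, rfl⟩, by rwa [hone]⟩
    exact hgreatest.csSup_eq.symm

theorem exists_map_eq_map_one_iff (hE : IsMonetaryOp E) (hL : IsPositiveLinearOp L) :
    (∃ X : Ω → ℝ, MemX X ∧ (∀ ω, 0 ≤ X ω ∧ X ω ≤ 1) ∧ E X < α ∧ L X = L fun _ => 1) ↔
      ∃ B : Set Ω, MeasurableSet B ∧ L (B.indicator fun _ => (1 : ℝ)) = 0 ∧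
        E (Bᶜ.indicator fun _ => (1 : ℝ)) < α := by
  constructor
  · rintro ⟨X, hX, hX01, hlt, hone⟩
    obtain ⟨δ, hδ0, hδ⟩ := exists_between (sub_pos.2 hlt)
    have hY : MemX ((fun _ => 1) - X) := (memX_const 1).sub hX
    have hLY : L ((fun _ => 1) - X) = 0 := by
      rw [hL.map_sub (memX_const 1) hX, hone, sub_self]
    have hB : MeasurableSet {ω | δ ≤ 1 - X ω} := measurableSet_le measurable_const hY.1
    have hle : ({ω | δ ≤ 1 - X ω}ᶜ.indicator fun _ => (1 : ℝ)) ≤ X + fun _ => δ := by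
      refine Set.indicator_le' (fun ω hω => ?_) fun ω _ => add_nonneg (hX01 ω).1 hδ0.le
      simp only [Set.mem_compl_iff, Set.mem_ofPred_eq, not_le] at hω
      simp only [Pi.add_apply]
      linarith
    refine ⟨_, hB, hL.map_indicator_eq_zero hY (fun ω => sub_nonneg.2 (hX01 ω).2) hLY hδ0, ?_⟩
    calc E ({ω | δ ≤ 1 - X ω}ᶜ.indicator fun _ => (1 : ℝ))
        ≤ E (X + fun _ => δ) :=
          hE.mono (memX_indicator_one hB.compl) (hX.add (memX_const δ)) hle
      _ = E X + δ := hE.map_add_const δ hX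
      _ < α := lt_sub_iff_add_lt'.1 hδ
  · rintro ⟨B, hB, hnull, hlt⟩
    refine ⟨_, memX_indicator_one hB.compl, fun ω => ?_, hlt, ?_⟩
    · by_cases h : ω ∈ B <;> simp [h]
    · rw [Set.indicator_compl, hL.map_sub (memX_const 1) (memX_indicator_one hB), hnull, sub_zero]

theorem slack_optimal_iff_beta_general (hE : IsMonetaryOp E) (hL : IsPositiveLinearOp L) :
    (∃ X : Ω → ℝ, MemX X ∧ (∀ ω, 0 ≤ X ω ∧ X ω ≤ 1) ∧ E X < α ∧
      L X = sSup (L '' testSet E α)) ↔ 1 - α < nullConjSup E L := by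
  calc (∃ X : Ω → ℝ, MemX X ∧ (∀ ω, 0 ≤ X ω ∧ X ω ≤ 1) ∧ E X < α ∧
        L X = sSup (L '' testSet E α))
      ↔ ∃ X : Ω → ℝ, MemX X ∧ (∀ ω, 0 ≤ X ω ∧ X ω ≤ 1) ∧ E X < α ∧ L X = L fun _ => 1 :=
        exists_congr fun _ => and_congr_right fun hX => and_congr_right fun hX01 =>
          and_congr_right fun hlt => map_eq_sSup_testSet_iff hE hL hX hX01 hlt
    _ ↔ ∃ B : Set Ω, MeasurableSet B ∧ L (B.indicator fun _ => (1 : ℝ)) = 0 ∧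
          E (Bᶜ.indicator fun _ => (1 : ℝ)) < α := exists_map_eq_map_one_iff hE hL
    _ ↔ ∃ B : Set Ω, MeasurableSet B ∧ L (B.indicator fun _ => (1 : ℝ)) = 0 ∧
          1 - α < conjOp E (B.indicator fun _ => (1 : ℝ)) :=
        exists_congr fun B => and_congr_right fun hB => by
          rw [hE.conjOp_indicator_one hB, sub_lt_sub_iff_left]
    _ ↔ 1 - α < nullConjSup E L := (lt_nullConjSup_iff hE hL.map_zero).symm

end Slack

/-- Theorem 4.3: with `ℬ = {B ∈ F : E_μ̄[1_B] > 0, E_{λQ_α^c}[1_B] = 0}` and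
`β = sup_{B ∈ ℬ} E_μ̄[1_B]` (`β = 0` if `ℬ = ∅`), there exists `X_α^0 ∈ 𝒳`,
`0 ≤ X_α^0 ≤ 1`, with `E_μ[X_α^0] < α` and `E_{λQ_α^c}[X_α^0] = γ_α^c`
if and only if `β > 1 - α`. -/
theorem slack_optimal_iff_beta {Ω : Type*} [MeasurableSpace Ω]
    (Emu Eups : (Ω → ℝ) → ℝ)
    (hEmu : IsSublinearOp Emu) (hEups : IsSublinearOp Eups)
    (α : ℝ) (hα0 : 0 < α) (hα1 : α < 1)
    (lam : ℝ) (hlam0 : 0 ≤ lam) (hlam1 : lam ≤ 1)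
    (Qc : Measure Ω) (hQc : IsProbabilityMeasure Qc)
    (Qp : (Ω → ℝ) → ℝ) (hQplin : IsLinearOp Qp)
    (hQppos : ∀ X : Ω → ℝ, MemX X → (∀ ω, 0 ≤ X ω) → 0 ≤ Qp X)
    (hQpone : Qp (fun _ => 1) = 1) (hQppure : PureAdditive Qp)
    (Qa : (Ω → ℝ) → ℝ) (hQalin : IsLinearOp Qa) (hQadom : Dominated Qa Eups)
    (hQasup : sSup (Qa '' testSet Emu α) = sSup (conjOp Eups '' testSet Emu α))
    (hQadec : ∀ X : Ω → ℝ, MemX X → Qa X = lam * ∫ ω, X ω ∂Qc + (1 - lam) * Qp X)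
    (γ : ℝ) (hγ : γ = sSup ((fun X : Ω → ℝ => lam * ∫ ω, X ω ∂Qc) '' testSet Emu α))
    (β : ℝ)
    (hβ : β = sSup {r : ℝ | ∃ B : Set Ω, MeasurableSet B ∧
        0 < conjOp Emu (B.indicator fun _ => (1 : ℝ)) ∧
        lam * ∫ ω, (B.indicator fun _ => (1 : ℝ)) ω ∂Qc = 0 ∧
        r = conjOp Emu (B.indicator fun _ => (1 : ℝ))}) :
    (∃ Xa0 : Ω → ℝ, MemX Xa0 ∧ (∀ ω, 0 ≤ Xa0 ω ∧ Xa0 ω ≤ 1) ∧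
        Emu Xa0 < α ∧ lam * ∫ ω, Xa0 ω ∂Qc = γ) ↔ 1 - α < β := by
  subst hγ hβ
  exact slack_optimal_iff_beta_general hEmu.isMonetaryOp
    (isPositiveLinearOp_const_mul_integral hlam0 Qc)
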